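/- Let G be a group, H a subgroup of index 2 (hence normal), s ∈ G with s ∉ H, and k a field. Let χ₁, χ₂ : H → kˣ be group homomorphisms, regarded as one-dimensional representations of H over k, and let χ₂^s denote the conjugate character h ↦ χ₂(s⁻¹ h s). Then there is an isomorphism of k-linear representations of G: Ind_H^G(χ₁) ⊗ Ind_H^G(χ₂) ≅ Ind_H^G(χ₁·χ₂) ⊕ Ind_H^G(χ₁·χ₂^s). -/

import Mathlib

open scoped TensorProduct

/-- The (co)induced representation space of a character `χ : H → kˣ`: functions
`f : G → k` with `f(hx) = χ(h)·f(x)` for all `h ∈ H`, `x ∈ G`. -/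
def IndSpace {k G : Type*} [Field k] [Group G] (H : Subgroup G) (χ : H →* kˣ) :
    Submodule k (G → k) where
  carrier := {f | ∀ (h : H) (x : G), f ((h : G) * x) = (χ h : k) * f x}
  add_mem' := by
    intro f g hf hg h x
    simp only [Set.mem_setOf_eq] at hf hg
    simp [Pi.add_apply, hf h x, hg h x, mul_add]
  zero_mem' := by intro h x; simp
  smul_mem' := by
    intro c f hf h x
    simp only [Set.mem_setOf_eq] at hf
    simp only [Pi.smul_apply, smul_eq_mul, hf h x]
    ring

/-- The representation of `G` on `IndSpace H χ` by right translation: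
`(g·f)(x) = f(xg)`.  This is the induced representation `Ind_H^G χ`. -/
noncomputable def IndRep {k G : Type*} [Field k] [Group G] (H : Subgroup G)
    (χ : H →* kˣ) : Representation k G (IndSpace H χ) where
  toFun g :=
    { toFun := fun f =>
        ⟨fun x => (f : G → k) (x * g), fun h x => by
          simpa [mul_assoc] using f.2 h (x * g)⟩
      map_add' := fun f₁ f₂ => Subtype.ext (funext fun x => rfl)
      map_smul' := fun c f => Subtype.ext (funext fun x => rfl) }
  map_one' := LinearMap.ext fun f => Subtype.ext (funext fun x => by simp)
  map_mul' := fun g₁ g₂ =>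
    LinearMap.ext fun f => Subtype.ext (funext fun x => by
      show (f : G → k) (x * (g₁ * g₂)) = (f : G → k) (x * g₁ * g₂)
      rw [mul_assoc])

/-- The conjugate character `χ^s : h ↦ χ(s⁻¹hs)` of a character of a normal
subgroup `H`. -/
def conjChar {k G : Type*} [Field k] [Group G] (H : Subgroup G) (hN : H.Normal)
    (s : G) (χ : H →* kˣ) : H →* kˣ where
  toFun h := χ ⟨s⁻¹ * (h : G) * s, by simpa using hN.conj_mem (h : G) h.2 s⁻¹⟩
  map_one' := by
    refine Eq.trans (congrArg χ (Subtype.ext ?_)) (map_one χ)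
    simp
  map_mul' := fun a b => by
    rw [← map_mul]
    refine congrArg χ (Subtype.ext ?_)
    simp only [Subgroup.coe_mul]
    group

/-!
Fix representatives `t i` of the cosets of `H`. The map sending `f ⊗ f'` to the family of functions
`x ↦ f x * f' ((t i)⁻¹ * x)` is equivariant for right translation. It is invertible because an
element of an induced space is freely determined by its values on any system of coset
representatives: for each `j`, normality makes `i ↦ (t i)⁻¹ * t j` such a system, so the values
`f (t j) * f' ((t i)⁻¹ * t j)` are exactly the coordinates of `f ⊗ f'` in a basis of the tensor
product adapted to these systems.
-/

/-- A family `t : ι → G` of representatives for the right cosets of `H`: each `x : G` lies in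
`H * t i` for exactly one `i`. Indexing the representatives by an arbitrary type allows
explicit families such as `![1, s]`. -/
def IsRightTransversal {G ι : Type*} [Group G] (H : Subgroup G) (t : ι → G) : Prop :=
  ∀ x : G, ∃! i, x * (t i)⁻¹ ∈ H

namespace IsRightTransversal

variable {G ι : Type*} [Group G] {H : Subgroup G} {t : ι → G}

theorem eq_of_mul_inv_mem (ht : IsRightTransversal H t) {i j : ι} (h : t i * (t j)⁻¹ ∈ H) :
    i = j :=
  (ht (t i)).unique (by simp) h

theorem inv_mul_right (ht : IsRightTransversal H t) (hN : H.Normal) (x : G) :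
    IsRightTransversal H fun i => (t i)⁻¹ * x := by
  intro y
  have mem_iff (i : ι) : y * ((t i)⁻¹ * x)⁻¹ ∈ H ↔ x * y⁻¹ * (t i)⁻¹ ∈ H := by
    rw [← inv_mem_iff, hN.mem_comm_iff]
    simp [mul_assoc]
  simpa only [mem_iff] using ht (x * y⁻¹)

theorem of_index_eq_two (hH : H.index = 2) {s : G} (hs : s ∉ H) :
    IsRightTransversal H ![1, s] := by
  intro x
  have mem_iff : x * s⁻¹ ∈ H ↔ x ∉ H := by
    rw [Subgroup.mul_mem_iff_of_index_two hH, inv_mem_iff]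
    tauto
  by_cases hx : x ∈ H
  · exact ⟨0, by simpa using hx, by simp [Fin.forall_fin_two, mem_iff, hx]⟩
  · exact ⟨1, by simpa [mem_iff] using hx, by simp [Fin.forall_fin_two, hx]⟩

end IsRightTransversal

theorem conjChar_one {k G : Type*} [Field k] [Group G] (H : Subgroup G) (hN : H.Normal)
    (χ : H →* kˣ) : conjChar H hN 1 χ = χ := by
  ext h
  simp [conjChar]

namespace IndSpace

variable {k G ι : Type*} [Field k] [Group G] {H : Subgroup G} {χ χ₁ χ₂ : H →* kˣ} {t : ι → G}

instance : CoeFun (IndSpace H χ) fun _ => G → k := ⟨Subtype.val⟩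

theorem apply_eq_of_mul_inv_mem (f : IndSpace H χ) {x a : G} (h : x * a⁻¹ ∈ H) :
    f x = χ ⟨x * a⁻¹, h⟩ * f a := by
  simpa using f.2 ⟨x * a⁻¹, h⟩ a

theorem ext_of_isRightTransversal (ht : IsRightTransversal H t) {f f' : IndSpace H χ}
    (h : ∀ i, f (t i) = f' (t i)) : f = f' := by
  ext x
  obtain ⟨i, hi, -⟩ := ht x
  rw [apply_eq_of_mul_inv_mem f hi, apply_eq_of_mul_inv_mem f' hi, h]

open Classical in
/-- The element of `Ind χ` supported on the coset `H * a` and equal to `1` at `a`. As `a` runs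
through representatives of the right cosets of `H`, these form a basis when `H` has finite
index. -/
noncomputable def single (χ : H →* kˣ) (a : G) : IndSpace H χ :=
  ⟨fun x => if hx : x * a⁻¹ ∈ H then (χ ⟨x * a⁻¹, hx⟩ : k) else 0, fun h x => by
    have mem_iff : (h : G) * x * a⁻¹ ∈ H ↔ x * a⁻¹ ∈ H := by
      rw [mul_assoc, H.mul_mem_cancel_left h.2]
    by_cases hx : x * a⁻¹ ∈ H
    · have mul_eq : (⟨h * x * a⁻¹, mem_iff.2 hx⟩ : H) = h * ⟨x * a⁻¹, hx⟩ :=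
        Subtype.ext (mul_assoc _ _ _)
      simp only [mem_iff, hx, dif_pos, mul_eq, map_mul, Units.val_mul]
    · simp only [mem_iff, hx, dif_neg, not_false_eq_true, mul_zero]⟩

theorem single_self (χ : H →* kˣ) (a : G) : single χ a a = 1 := by
  have one_eq : (⟨1, H.one_mem⟩ : H) = 1 := rfl
  simp [single, one_eq]

theorem single_of_notMem (χ : H →* kˣ) {a x : G} (hx : x * a⁻¹ ∉ H) : single χ a x = 0 :=
  dif_neg hx

theorem single_apply_of_isRightTransversal [DecidableEq ι] (χ : H →* kˣ)
    (ht : IsRightTransversal H t) (i j : ι) :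
    single χ (t i) (t j) = if i = j then 1 else 0 := by
  split_ifs with hij
  · rw [hij, single_self]
  · exact single_of_notMem χ fun h => hij (ht.eq_of_mul_inv_mem h).symm

theorem sum_apply_smul_single [Fintype ι] (ht : IsRightTransversal H t) (f : IndSpace H χ) :
    ∑ i, f (t i) • single χ (t i) = f := by
  classical
  refine ext_of_isRightTransversal ht fun j => ?_
  simp [single_apply_of_isRightTransversal χ ht]

/-- Pointwise multiplication `Ind χ₁ ⊗ Ind χ₂ → Ind (χ₁ χ₂)`. -/
noncomputable def mulMap (χ₁ χ₂ : H →* kˣ) :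
    IndSpace H χ₁ ⊗[k] IndSpace H χ₂ →ₗ[k] IndSpace H (χ₁ * χ₂) :=
  TensorProduct.lift <| LinearMap.mk₂ k
    (fun f f' => ⟨fun x => f x * f' x, fun h x => by
      simp only [f.2 h x, f'.2 h x, MonoidHom.mul_apply, Units.val_mul, mul_mul_mul_comm]⟩)
    (fun _ _ _ => Subtype.ext (funext fun _ => add_mul _ _ _))
    (fun _ _ _ => Subtype.ext (funext fun _ => mul_assoc _ _ _))
    (fun _ _ _ => Subtype.ext (funext fun _ => mul_add _ _ _))
    (fun _ _ _ => Subtype.ext (funext fun _ => mul_left_comm _ _ _))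

/-- Left translation `f ↦ f (s⁻¹ * ·)`, from `Ind χ` to `Ind χ^s`. -/
def translate (hN : H.Normal) (s : G) (χ : H →* kˣ) :
    IndSpace H χ →ₗ[k] IndSpace H (conjChar H hN s χ) where
  toFun f := ⟨fun x => f (s⁻¹ * x), fun h x => by
    have conj_mem : s⁻¹ * h * s ∈ H := by simpa using hN.conj_mem (h : G) h.2 s⁻¹
    simpa [mul_assoc, conjChar] using f.2 ⟨s⁻¹ * h * s, conj_mem⟩ (s⁻¹ * x)⟩
  map_add' _ _ := rfl
  map_smul' _ _ := rfl

/-- The map `Ind χ₁ ⊗ Ind χ₂ → Ind (χ₁ χ₂^s)` sending `f ⊗ f'` to `x ↦ f x * f' (s⁻¹ * x)`: the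
projection to the summand of the Mackey decomposition attached to `s`. -/
noncomputable def mackeyProj (hN : H.Normal) (s : G) (χ₁ χ₂ : H →* kˣ) :
    IndSpace H χ₁ ⊗[k] IndSpace H χ₂ →ₗ[k] IndSpace H (χ₁ * conjChar H hN s χ₂) :=
  mulMap χ₁ (conjChar H hN s χ₂) ∘ₗ (translate hN s χ₂).lTensor (IndSpace H χ₁)

@[simp]
theorem mackeyProj_tmul_apply (hN : H.Normal) (s : G) (f : IndSpace H χ₁) (f' : IndSpace H χ₂)
    (x : G) : mackeyProj hN s χ₁ χ₂ (f ⊗ₜ f') x = f x * f' (s⁻¹ * x) :=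
  rfl

theorem mackeyProj_tprod (hN : H.Normal) (s g : G) (v : IndSpace H χ₁ ⊗[k] IndSpace H χ₂) :
    mackeyProj hN s χ₁ χ₂ ((IndRep H χ₁).tprod (IndRep H χ₂) g v) =
      IndRep H (χ₁ * conjChar H hN s χ₂) g (mackeyProj hN s χ₁ χ₂ v) := by
  induction v with
  | zero => simp only [map_zero]
  | add v w hv hw => simp only [map_add, hv, hw]
  | tmul f f' =>
    ext x
    change f (x * g) * f' (s⁻¹ * x * g) = f (x * g) * f' (s⁻¹ * (x * g))
    rw [mul_assoc]

variable [Fintype ι]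

/-- The inverse of the Mackey decomposition attached to a family `t` of coset representatives.
The `i`-th summand contributes the tensors `single (t j) ⊗ single ((t i)⁻¹ * t j)`, which is how
the second factor is sampled by `mackeyProj (t i)` at `t j`. -/
noncomputable def mackeyInv (hN : H.Normal) (t : ι → G) (χ₁ χ₂ : H →* kˣ) :
    (∀ i, IndSpace H (χ₁ * conjChar H hN (t i) χ₂)) →ₗ[k]
      IndSpace H χ₁ ⊗[k] IndSpace H χ₂ where
  toFun F := ∑ j, ∑ i, F i (t j) • (single χ₁ (t j) ⊗ₜ single χ₂ ((t i)⁻¹ * t j))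
  map_add' F F' := by simp [add_smul, Finset.sum_add_distrib]
  map_smul' c F := by simp [mul_smul, Finset.smul_sum]

theorem mackeyInv_apply (hN : H.Normal)
    (F : ∀ i, IndSpace H (χ₁ * conjChar H hN (t i) χ₂)) :
    mackeyInv hN t χ₁ χ₂ F =
      ∑ j, ∑ i, F i (t j) • (single χ₁ (t j) ⊗ₜ single χ₂ ((t i)⁻¹ * t j)) :=
  rfl

theorem mackeyProj_mackeyInv (hN : H.Normal) (ht : IsRightTransversal H t)
    (F : ∀ i, IndSpace H (χ₁ * conjChar H hN (t i) χ₂)) (i : ι) :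
    mackeyProj hN (t i) χ₁ χ₂ (mackeyInv hN t χ₁ χ₂ F) = F i := by
  classical
  refine ext_of_isRightTransversal ht fun j => ?_
  have single_inv_mul (i' : ι) :
      single χ₂ ((t i')⁻¹ * t j) ((t i)⁻¹ * t j) = if i' = i then 1 else 0 :=
    single_apply_of_isRightTransversal χ₂ (ht.inv_mul_right hN (t j)) i' i
  simp [mackeyInv_apply, single_apply_of_isRightTransversal χ₁ ht, single_inv_mul]

theorem mackeyInv_mackeyProj (hN : H.Normal) (ht : IsRightTransversal H t)
    (v : IndSpace H χ₁ ⊗[k] IndSpace H χ₂) :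
    mackeyInv hN t χ₁ χ₂ (fun i => mackeyProj hN (t i) χ₁ χ₂ v) = v := by
  change (mackeyInv hN t χ₁ χ₂ ∘ₗ LinearMap.pi fun i => mackeyProj hN (t i) χ₁ χ₂) v = v
  refine LinearMap.congr_fun (TensorProduct.ext' fun f f' => ?_ : _ = LinearMap.id) v
  calc
    _ = ∑ j, ∑ i, (f (t j) * f' ((t i)⁻¹ * t j)) •
          (single χ₁ (t j) ⊗ₜ[k] single χ₂ ((t i)⁻¹ * t j)) := rfl
    _ = ∑ j, (f (t j) • single χ₁ (t j)) ⊗ₜ[k]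
          ∑ i, f' ((t i)⁻¹ * t j) • single χ₂ ((t i)⁻¹ * t j) := by
      simp only [TensorProduct.tmul_sum, TensorProduct.smul_tmul_smul]
    _ = f ⊗ₜ f' := by
      simp only [sum_apply_smul_single (ht.inv_mul_right hN _), ← TensorProduct.sum_tmul,
        sum_apply_smul_single ht]

/-- The Mackey decomposition `Ind χ₁ ⊗ Ind χ₂ ≃ ∏ i, Ind (χ₁ χ₂^(t i))` for a normal subgroup of
finite index with coset representatives `t`. -/
noncomputable def mackeyEquiv (hN : H.Normal) (ht : IsRightTransversal H t) (χ₁ χ₂ : H →* kˣ) :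
    (IndSpace H χ₁ ⊗[k] IndSpace H χ₂) ≃ₗ[k]
      ∀ i, IndSpace H (χ₁ * conjChar H hN (t i) χ₂) where
  toLinearMap := LinearMap.pi fun i => mackeyProj hN (t i) χ₁ χ₂
  invFun := mackeyInv hN t χ₁ χ₂
  left_inv := mackeyInv_mackeyProj hN ht
  right_inv F := funext (mackeyProj_mackeyInv hN ht F)

end IndSpace

theorem ind_tensor_ind_iso_general {k G ι : Type*} [Field k] [Group G] [Finite ι]
    (H : Subgroup G) (hN : H.Normal) {t : ι → G} (ht : IsRightTransversal H t)
    (χ₁ χ₂ : H →* kˣ) :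
    ∃ e : (IndSpace H χ₁ ⊗[k] IndSpace H χ₂) ≃ₗ[k]
        ∀ i, IndSpace H (χ₁ * conjChar H hN (t i) χ₂),
      ∀ (g : G) (v : IndSpace H χ₁ ⊗[k] IndSpace H χ₂) (i : ι),
        e (((IndRep H χ₁).tprod (IndRep H χ₂)) g v) i =
          IndRep H (χ₁ * conjChar H hN (t i) χ₂) g (e v i) := by
  cases nonempty_fintype ι
  exact ⟨IndSpace.mackeyEquiv hN ht χ₁ χ₂, fun g v i => IndSpace.mackeyProj_tprod hN (t i) g v⟩

/-- Mackey decomposition for an index-two subgroup: if `H ≤ G` has index `2`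
(hence is normal), `s ∉ H`, and `χ₁, χ₂ : H → kˣ` are characters, then
`Ind_H^G(χ₁) ⊗ Ind_H^G(χ₂) ≅ Ind_H^G(χ₁χ₂) ⊕ Ind_H^G(χ₁·χ₂^s)` as `k`-linear
representations of `G` (the direct sum being realised as a product with the
componentwise action). -/
theorem ind_tensor_ind_iso {k G : Type*} [Field k] [Group G] (H : Subgroup G)
    (hH : H.index = 2) (hN : H.Normal) (s : G) (hs : s ∉ H) (χ₁ χ₂ : H →* kˣ) :
    ∃ e : (IndSpace H χ₁ ⊗[k] IndSpace H χ₂) ≃ₗ[k]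
        (IndSpace H (χ₁ * χ₂) × IndSpace H (χ₁ * conjChar H hN s χ₂)),
      ∀ (g : G) (v : IndSpace H χ₁ ⊗[k] IndSpace H χ₂),
        e (((IndRep H χ₁).tprod (IndRep H χ₂)) g v) =
          (LinearMap.prodMap ((IndRep H (χ₁ * χ₂)) g)
            ((IndRep H (χ₁ * conjChar H hN s χ₂)) g)) (e v) := by
  obtain ⟨e, he⟩ := ind_tensor_ind_iso_general H hN (.of_index_eq_two hH hs) χ₁ χ₂
  have one_eq : IndSpace H (χ₁ * conjChar H hN 1 χ₂) = IndSpace H (χ₁ * χ₂) := by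
    rw [conjChar_one]
  refine ⟨e ≪≫ₗ LinearEquiv.piFinTwo k _ ≪≫ₗ
    (LinearEquiv.ofEq _ _ one_eq).prodCongr (.refl k _), fun g v => Prod.ext ?_ (he g v 1)⟩
  exact congrArg (LinearEquiv.ofEq _ _ one_eq) (he g v 0)
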